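/- Let N be a positive integer, h = 2π/(2N+1), and let 0 ≤ α < 1/4. Let δ_j, for −N ≤ j ≤ N, be real numbers with |δ_j| ≤ α, and let F and F̃ be the (2N+1)×(2N+1) complex matrices with entries F_{jk} = exp(−2πi jk/(2N+1)) and F̃_{jk} = exp(−2πi (j+δ_j)k/(2N+1)) for −N ≤ j,k ≤ N. Then ‖F − F̃‖₂ ≤ φ_α ‖F‖₂ = φ_α √(2N+1), where φ_α = 1 − cos(πα) + sin(πα) and ‖·‖₂ denotes the spectral (operator 2-)norm. -/

import Mathlib

open Real

/-!
Kadec's argument. For `x ∈ [-π, π]` write `1 - exp (-iδx) = (1 - cos δx) + i sin δx` and expand the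
even part in the frequencies `n` and the odd part in the frequencies `n + 1/2`, `n ∈ ℤ`. When
`|δ| ≤ α ≤ 1/4`, the coefficients are dominated by `(-1)ⁿ` times those for `α`, and these bounds
are the terms of the two series for `δ = α` at `x = π` (divided by `i` in the odd case), so they
sum to `1 - cos πα` and `sin πα`. Every term separates the variables `δ` and `x`: it acts on a
matrix by multiplication with a diagonal matrix on either side, so the operator norms add up.
-/

section FourierSeries

lemma hasSum_fourierCoeffOn_of_summable {a b : ℝ} (hab : a < b) {f : ℝ → ℂ}
    (hf : ContinuousOn f (Set.Icc a b)) (hfab : f a = f b)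
    (hsum : Summable (fourierCoeffOn hab f)) {x : ℝ} (hx : x ∈ Set.Icc a b) :
    HasSum (fun n => fourierCoeffOn hab f n * fourier n (x : AddCircle (b - a))) (f x) := by
  have : Fact (0 < b - a) := ⟨sub_pos.2 hab⟩
  have hend : a + (b - a) = b := add_sub_cancel a b
  let g : C(AddCircle (b - a), ℂ) := ⟨AddCircle.liftIco (b - a) a f,
    AddCircle.liftIco_continuous (by rw [hend, hfab]) (by rwa [hend])⟩
  have hg : fourierCoeff g = fourierCoeffOn hab f := by
    ext n
    refine (fourierCoeff_liftIco_eq (T := b - a) f n).trans ?_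
    congr 1
  have hgx : g x = f x := by
    rcases hx.2.eq_or_lt with rfl | hxb
    · have hga : g (a : AddCircle (x - a)) = f a :=
        AddCircle.liftIco_coe_apply ⟨le_rfl, by rwa [hend]⟩
      rw [← hfab, ← hga, ← AddCircle.coe_add_period (x - a) a, hend]
    · exact AddCircle.liftIco_coe_apply ⟨hx.1, by rwa [hend]⟩
  have h := has_pointwise_sum_fourier_series_of_summable (f := g) (hg ▸ hsum) x
  rwa [hgx, hg] at h

lemma hasSum_exp_of_integral_eq {f : ℝ → ℂ} {s : ℝ} {c : ℤ → ℂ} (hf : Continuous f)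
    (hper : Complex.exp ((s * π : ℝ) * Complex.I) * f (-π) =
      Complex.exp ((-s * π : ℝ) * Complex.I) * f π)
    (hc : Summable c)
    (hcoeff : ∀ n : ℤ, ∫ x in (-π)..π, Complex.exp ((-(n + s) * x : ℝ) * Complex.I) * f x =
      2 * π * c n)
    {x : ℝ} (hx : x ∈ Set.Icc (-π) π) :
    HasSum (fun n : ℤ => c n * Complex.exp (((n + s) * x : ℝ) * Complex.I)) (f x) := by
  have hab : -π < π := neg_lt_self pi_pos
  let g : ℝ → ℂ := fun x => Complex.exp ((-s * x : ℝ) * Complex.I) * f x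
  have hfourier (n : ℤ) (x : ℝ) :
      fourier n (x : AddCircle (π - -π)) = Complex.exp ((n * x : ℝ) * Complex.I) := by
    rw [fourier_coe_apply]
    push_cast
    congr 1
    field_simp
    ring
  have hg : fourierCoeffOn hab g = c := by
    ext n
    have hint : ∫ x in (-π)..π, fourier (-n) (x : AddCircle (π - -π)) • g x = 2 * π * c n := by
      rw [← hcoeff]
      refine intervalIntegral.integral_congr fun x _ => ?_
      simp only [g, hfourier, smul_eq_mul, ← mul_assoc, ← Complex.exp_add]
      congr 2
      push_cast
      ring
    rw [fourierCoeffOn_eq_integral, hint, Complex.real_smul]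
    push_cast
    field_simp
    ring
  have h := (hasSum_fourierCoeffOn_of_summable hab (f := g) (by fun_prop)
    (by simpa [g] using hper) (by rwa [hg]) hx).mul_left (Complex.exp ((s * x : ℝ) * Complex.I))
  have hgx : Complex.exp ((s * x : ℝ) * Complex.I) * g x = f x := by
    simp [g, ← mul_assoc, ← Complex.exp_add]
  rw [hg, hgx] at h
  refine h.congr_fun fun n => ?_
  rw [hfourier, mul_left_comm, ← Complex.exp_add]
  congr 2
  push_cast
  ring

end FourierSeries

section Coefficients

/-- The Fourier coefficient `(2π)⁻¹ ∫ exp (-iμx) cos (δx) dx` over `[-π, π]`, written with `sinc` so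
that `μ = ±δ` is not an exceptional case. -/
noncomputable def cosCoeff (δ μ : ℝ) : ℝ :=
  (sinc (π * (δ - μ)) + sinc (π * (δ + μ))) / 2

/-- The Fourier coefficient `(2π)⁻¹ ∫ exp (-iμx) i sin (δx) dx` over `[-π, π]`; the factor `i`
makes it real. -/
noncomputable def sinCoeff (δ μ : ℝ) : ℝ :=
  (sinc (π * (δ - μ)) - sinc (π * (δ + μ))) / 2

lemma integral_exp_mul_mul_I_eq_sinc (β r : ℝ) :
    ∫ x in (-r)..r, Complex.exp ((β * x : ℝ) * Complex.I) = 2 * r * sinc (r * β) := by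
  rcases eq_or_ne β 0 with rfl | hβ
  · simp only [zero_mul, Complex.ofReal_zero, Complex.exp_zero, intervalIntegral.integral_const,
      mul_zero, sinc_zero, Complex.real_smul]
    push_cast
    ring
  have hβ' : (β : ℂ) ≠ 0 := Complex.ofReal_ne_zero.2 hβ
  have h := intervalIntegral.smul_integral_comp_mul_left (a := -r) (b := r)
    (fun x : ℝ => Complex.exp (x * Complex.I)) β
  rw [mul_neg, integral_exp_mul_I_eq_sinc, Complex.real_smul, mul_comm β r] at h
  apply mul_left_cancel₀ hβ'
  rw [h]
  push_cast
  ring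

lemma intervalIntegrable_exp_mul_I (β a b : ℝ) : IntervalIntegrable
    (fun x : ℝ => Complex.exp ((β * x : ℝ) * Complex.I)) MeasureTheory.volume a b :=
  Continuous.intervalIntegrable (by fun_prop) _ _

lemma integral_exp_mul_cos (δ μ : ℝ) :
    ∫ x in (-π)..π, Complex.exp ((-μ * x : ℝ) * Complex.I) * (cos (δ * x) : ℝ) =
      2 * π * cosCoeff δ μ := by
  have heuler (x : ℝ) : Complex.exp ((-μ * x : ℝ) * Complex.I) * (cos (δ * x) : ℝ) =
      (Complex.exp (((δ - μ) * x : ℝ) * Complex.I) +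
        Complex.exp ((-(δ + μ) * x : ℝ) * Complex.I)) / 2 := by
    rw [Complex.ofReal_cos, Complex.cos, mul_div_assoc', mul_add, ← Complex.exp_add,
      ← Complex.exp_add]
    push_cast
    ring_nf
  simp only [heuler]
  rw [intervalIntegral.integral_div, intervalIntegral.integral_add
      (intervalIntegrable_exp_mul_I _ _ _) (intervalIntegrable_exp_mul_I _ _ _),
    integral_exp_mul_mul_I_eq_sinc, integral_exp_mul_mul_I_eq_sinc, mul_neg, sinc_neg, cosCoeff]
  push_cast
  ring

lemma integral_exp_mul_I_mul_sin (δ μ : ℝ) :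
    ∫ x in (-π)..π, Complex.exp ((-μ * x : ℝ) * Complex.I) * (Complex.I * (sin (δ * x) : ℝ)) =
      2 * π * sinCoeff δ μ := by
  have heuler (x : ℝ) :
      Complex.exp ((-μ * x : ℝ) * Complex.I) * (Complex.I * (sin (δ * x) : ℝ)) =
      (Complex.exp (((δ - μ) * x : ℝ) * Complex.I) -
        Complex.exp ((-(δ + μ) * x : ℝ) * Complex.I)) / 2 := by
    have hsin : Complex.I * (sin (δ * x) : ℝ) = (Complex.exp ((δ * x : ℝ) * Complex.I) -
        Complex.exp (-(δ * x : ℝ) * Complex.I)) / 2 := by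
      rw [Complex.ofReal_sin, Complex.sin]
      linear_combination (Complex.exp (-(δ * x : ℝ) * Complex.I) -
        Complex.exp ((δ * x : ℝ) * Complex.I)) / 2 * Complex.I_sq
    rw [hsin, mul_div_assoc', mul_sub, ← Complex.exp_add, ← Complex.exp_add]
    push_cast
    ring_nf
  simp only [heuler]
  rw [intervalIntegral.integral_div, intervalIntegral.integral_sub
      (intervalIntegrable_exp_mul_I _ _ _) (intervalIntegrable_exp_mul_I _ _ _),
    integral_exp_mul_mul_I_eq_sinc, integral_exp_mul_mul_I_eq_sinc, mul_neg, sinc_neg, sinCoeff]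
  push_cast
  ring

lemma sinc_pi_mul_of_ne_zero {t : ℝ} (ht : t ≠ 0) : sinc (π * t) = sin (π * t) / (π * t) :=
  sinc_of_ne_zero (mul_ne_zero pi_ne_zero ht)

lemma cosCoeff_intCast {δ : ℝ} {n : ℤ} (h : (n : ℝ) ^ 2 ≠ δ ^ 2) :
    cosCoeff δ n = -((-1) ^ n * (δ * sin (π * δ) / (π * ((n : ℝ) ^ 2 - δ ^ 2)))) := by
  have hne : (n : ℝ) ^ 2 - δ ^ 2 ≠ 0 := sub_ne_zero.2 h
  have hsub : δ - n ≠ 0 := fun h0 => hne (by linear_combination (-δ - n) * h0)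
  have hadd : δ + n ≠ 0 := fun h0 => hne (by linear_combination (n - δ) * h0)
  have hsin_sub : sin (π * (δ - n)) = (-1) ^ n * sin (π * δ) := by
    rw [← sin_sub_int_mul_pi]; ring_nf
  have hsin_add : sin (π * (δ + n)) = (-1) ^ n * sin (π * δ) := by
    rw [← sin_add_int_mul_pi]; ring_nf
  rw [cosCoeff, sinc_pi_mul_of_ne_zero hsub, sinc_pi_mul_of_ne_zero hadd, hsin_sub, hsin_add]
  field_simp
  ring

lemma sinCoeff_intCast_add_half {δ : ℝ} {n : ℤ} (h : ((n : ℝ) + 1 / 2) ^ 2 ≠ δ ^ 2) :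
    sinCoeff δ (n + 1 / 2) =
      (-1) ^ n * (δ * cos (π * δ) / (π * (((n : ℝ) + 1 / 2) ^ 2 - δ ^ 2))) := by
  have hne : ((n : ℝ) + 1 / 2) ^ 2 - δ ^ 2 ≠ 0 := sub_ne_zero.2 h
  have hsin_sub : sin (π * (δ - (n + 1 / 2))) = -((-1) ^ n * cos (π * δ)) := by
    rw [← cos_sub_int_mul_pi, ← sin_sub_pi_div_two]; ring_nf
  have hsin_add : sin (π * (δ + (n + 1 / 2))) = (-1) ^ n * cos (π * δ) := by
    rw [← cos_add_int_mul_pi, ← sin_add_pi_div_two]; ring_nf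
  generalize (n : ℝ) + 1 / 2 = μ at *
  have hsub : δ - μ ≠ 0 := fun h0 => hne (by linear_combination (-δ - μ) * h0)
  have hadd : δ + μ ≠ 0 := fun h0 => hne (by linear_combination (μ - δ) * h0)
  rw [sinCoeff, sinc_pi_mul_of_ne_zero hsub, sinc_pi_mul_of_ne_zero hadd, hsin_sub, hsin_add]
  field_simp
  ring

open Filter Asymptotics in
lemma summable_inv_sq_sub_sq (s δ : ℝ) :
    Summable fun n : ℤ => (((n : ℝ) + s) ^ 2 - δ ^ 2)⁻¹ := by
  have hlin (a : ℝ) : (fun n : ℤ => ((n : ℝ) + a)⁻¹) =O[cofinite] fun n => (n : ℝ)⁻¹ := by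
    refine .of_norm_left <|
      (EisensteinSeries.linear_inv_isBigO_right 1 a).norm_left.congr_left fun n => ?_
    rw [← Complex.norm_real]
    push_cast
    ring_nf
  refine summable_of_isBigO (summable_one_div_int_pow.2 one_lt_two)
    (((hlin (s - δ)).mul (hlin (s + δ))).congr (fun n => ?_) fun n => ?_)
  · rw [← mul_inv]
    ring_nf
  · rw [← mul_inv, ← sq, one_div]

open Filter in
lemma eventually_intCast_add_sq_ne (s δ : ℝ) :
    ∀ᶠ n : ℤ in cofinite, ((n : ℝ) + s) ^ 2 ≠ δ ^ 2 := by
  have hfin : {n : ℤ | (n : ℝ) ∈ ({δ - s, -δ - s} : Set ℝ)}.Finite :=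
    (Set.toFinite _).preimage Int.cast_injective.injOn
  filter_upwards [hfin.compl_mem_cofinite] with n hn h
  rcases sq_eq_sq_iff_eq_or_eq_neg.1 h with h | h
  · exact hn (.inl (by linarith))
  · exact hn (.inr (by rw [Set.mem_singleton_iff]; linarith))

lemma summable_cosCoeff (δ : ℝ) : Summable fun n : ℤ => cosCoeff δ n := by
  have hsum := ((summable_inv_sq_sub_sq 0 δ).mul_left (δ * sin (π * δ) / π)).norm
  refine .of_norm_bounded_eventually hsum ?_
  filter_upwards [eventually_intCast_add_sq_ne 0 δ] with n hn
  rw [add_zero] at hn ⊢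
  rw [cosCoeff_intCast hn, norm_eq_abs, norm_eq_abs, abs_neg, abs_mul, abs_neg_one_zpow, one_mul,
    ← div_div, div_eq_mul_inv (_ / π)]

lemma summable_sinCoeff (δ : ℝ) : Summable fun n : ℤ => sinCoeff δ (n + 1 / 2) := by
  have hsum := ((summable_inv_sq_sub_sq (1 / 2) δ).mul_left (δ * cos (π * δ) / π)).norm
  refine .of_norm_bounded_eventually hsum ?_
  filter_upwards [eventually_intCast_add_sq_ne (1 / 2) δ] with n hn
  rw [sinCoeff_intCast_add_half hn, norm_eq_abs, norm_eq_abs, abs_mul, abs_neg_one_zpow, one_mul,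
    ← div_div, div_eq_mul_inv (_ / π)]

lemma hasSum_cosCoeff (δ : ℝ) {x : ℝ} (hx : x ∈ Set.Icc (-π) π) :
    HasSum (fun n : ℤ => (cosCoeff δ n : ℂ) * Complex.exp ((n * x : ℝ) * Complex.I))
      (cos (δ * x) : ℝ) := by
  simpa using hasSum_exp_of_integral_eq (f := fun x => ((cos (δ * x) : ℝ) : ℂ)) (s := 0)
    (by fun_prop) (by simp) (Complex.summable_ofReal.2 (summable_cosCoeff δ))
    (fun n => by rw [add_zero, integral_exp_mul_cos]) hx

lemma hasSum_sinCoeff (δ : ℝ) {x : ℝ} (hx : x ∈ Set.Icc (-π) π) :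
    HasSum (fun n : ℤ => (sinCoeff δ (n + 1 / 2) : ℂ) *
      Complex.exp (((n + 1 / 2) * x : ℝ) * Complex.I)) (Complex.I * (sin (δ * x) : ℝ)) := by
  refine hasSum_exp_of_integral_eq (f := fun x => Complex.I * ((sin (δ * x) : ℝ) : ℂ))
    (by fun_prop) ?_ (Complex.summable_ofReal.2 (summable_sinCoeff δ))
    (fun n => integral_exp_mul_I_mul_sin δ _) hx
  have hpos : Complex.exp ((1 / 2 * π : ℝ) * Complex.I) = Complex.I := by
    convert Complex.exp_pi_div_two_mul_I using 2; push_cast; ring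
  have hneg : Complex.exp ((-(1 / 2) * π : ℝ) * Complex.I) = -Complex.I := by
    convert Complex.exp_neg_pi_div_two_mul_I using 2; push_cast; ring
  rw [hpos, hneg, mul_neg, sin_neg]
  push_cast
  ring

/-- The Fourier coefficient `(2π)⁻¹ ∫ exp (-iμx) (1 - cos (δx)) dx` over `[-π, π]`. -/
noncomputable def oneSubCosCoeff (δ μ : ℝ) : ℝ :=
  cosCoeff 0 μ - cosCoeff δ μ

lemma hasSum_oneSubCosCoeff (δ : ℝ) {x : ℝ} (hx : x ∈ Set.Icc (-π) π) :
    HasSum (fun n : ℤ => (oneSubCosCoeff δ n : ℂ) * Complex.exp ((n * x : ℝ) * Complex.I))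
      (1 - cos (δ * x) : ℝ) := by
  have h := (hasSum_cosCoeff 0 hx).sub (hasSum_cosCoeff δ hx)
  simp only [zero_mul, cos_zero, ← Complex.ofReal_sub, ← sub_mul] at h
  exact h

lemma exp_intCast_mul_pi_mul_I (n : ℤ) :
    Complex.exp ((n * π : ℝ) * Complex.I) = (-1) ^ n := by
  rw [← Complex.exp_pi_mul_I, ← Complex.exp_int_mul, Complex.ofReal_mul, Complex.ofReal_intCast,
    mul_assoc]

lemma hasSum_neg_one_zpow_mul_oneSubCosCoeff (α : ℝ) :
    HasSum (fun n : ℤ => (-1) ^ n * oneSubCosCoeff α n) (1 - cos (π * α)) := by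
  have h := hasSum_oneSubCosCoeff α (Set.right_mem_Icc.2 (neg_lt_self pi_pos).le)
  rw [← Complex.hasSum_ofReal, mul_comm π]
  refine h.congr_fun fun n => ?_
  rw [exp_intCast_mul_pi_mul_I]
  push_cast
  ring

lemma hasSum_neg_one_zpow_mul_sinCoeff (α : ℝ) :
    HasSum (fun n : ℤ => (-1) ^ n * sinCoeff α (n + 1 / 2)) (sin (π * α)) := by
  have h := (hasSum_sinCoeff α (Set.right_mem_Icc.2 (neg_lt_self pi_pos).le)).mul_left (-Complex.I)
  rw [← mul_assoc, neg_mul, Complex.I_mul_I, neg_neg, one_mul] at h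
  rw [← Complex.hasSum_ofReal, mul_comm π]
  refine h.congr_fun fun n => ?_
  have hexp : Complex.exp (((n + 1 / 2) * π : ℝ) * Complex.I) = (-1) ^ n * Complex.I := by
    rw [← exp_intCast_mul_pi_mul_I]
    nth_rw 3 [← Complex.exp_pi_div_two_mul_I]
    rw [← Complex.exp_add]
    push_cast
    ring_nf
  rw [hexp]
  push_cast
  linear_combination (-1) ^ n * (sinCoeff α (n + 1 / 2) : ℂ) * Complex.I_sq

end Coefficients

section Monotonicity

lemma antitoneOn_sinc : AntitoneOn sinc (Set.Icc 0 π) := by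
  intro x hx y hy hxy
  rcases hx.1.eq_or_lt with rfl | hx0
  · simpa using sinc_le_one y
  have hy0 : 0 < y := hx0.trans_le hxy
  rw [sinc_eq_dslope, dslope_of_ne _ hx0.ne', dslope_of_ne _ hy0.ne']
  exact strictConcaveOn_sin_Icc.concaveOn.slope_anti (Set.left_mem_Icc.2 pi_pos.le)
    ⟨hx, hx0.ne'⟩ ⟨hy, hy0.ne'⟩ hxy

lemma monotoneOn_mul_cos : MonotoneOn (fun x : ℝ => x * cos x) (Set.Icc 0 (π / 4)) := by
  refine monotoneOn_of_hasDerivWithinAt_nonneg (f' := fun x => cos x - x * sin x)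
    (convex_Icc _ _) (by fun_prop) (fun x _ => ?_) fun x hx => ?_
  · exact (((hasDerivAt_id' x).mul (hasDerivAt_cos x)).congr_deriv (by ring)).hasDerivWithinAt
  · rw [interior_Icc] at hx
    have hsin : 0 ≤ sin x := sin_nonneg_of_nonneg_of_le_pi hx.1.le (by linarith [hx.2, pi_pos])
    have hsin_le_cos : sin x ≤ cos x := by
      rw [← sin_pi_div_two_sub]
      exact sin_le_sin_of_le_of_le_pi_div_two (by linarith [hx.1, pi_pos])
        (by linarith [hx.1]) (by linarith [hx.2])
    have hx1 : x ≤ 1 := by linarith [hx.2, pi_le_four]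
    exact sub_nonneg.2 ((mul_le_of_le_one_left hsin hx1).trans hsin_le_cos)

lemma abs_mul_sin_pi_mul_le {δ α : ℝ} (hδ : |δ| ≤ α) (hα : α ≤ 1 / 2) :
    |δ * sin (π * δ)| ≤ α * sin (π * α) := by
  have hpi := pi_pos
  have hle : |π * δ| ≤ π * α := by rw [abs_mul, abs_of_pos hpi]; gcongr
  have hsin : |sin (π * δ)| ≤ sin (π * α) := by
    rw [abs_sin_eq_sin_abs_of_abs_le_pi (by nlinarith)]
    exact sin_le_sin_of_le_of_le_pi_div_two (by linarith [abs_nonneg (π * δ)]) (by nlinarith) hle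
  rw [abs_mul]
  exact mul_le_mul hδ hsin (abs_nonneg _) ((abs_nonneg δ).trans hδ)

lemma abs_mul_cos_pi_mul_le {δ α : ℝ} (hδ : |δ| ≤ α) (hα : α ≤ 1 / 4) :
    |δ * cos (π * δ)| ≤ α * cos (π * α) := by
  have hpi := pi_pos
  have hmono : π * |δ| * cos (π * |δ|) ≤ π * α * cos (π * α) :=
    monotoneOn_mul_cos ⟨by positivity, by nlinarith⟩
      ⟨by nlinarith [abs_nonneg δ], by nlinarith⟩ (by gcongr)
  have hcos : |cos (π * δ)| = cos (π * |δ|) := by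
    rw [← cos_abs, abs_mul, abs_of_pos hpi, abs_of_nonneg]
    exact cos_nonneg_of_neg_pi_div_two_le_of_le (by nlinarith [abs_nonneg δ]) (by nlinarith)
  rw [abs_mul, hcos]
  exact le_of_mul_le_mul_left (by simpa only [mul_assoc] using hmono) hpi

lemma abs_neg_one_zpow_mul_div_le {p q δ α μ : ℝ} (n : ℤ) (hpq : |p| ≤ q) (hδ : |δ| ≤ α)
    (hα : α ^ 2 < μ ^ 2) :
    |(-1) ^ n * (p / (π * (μ ^ 2 - δ ^ 2)))| ≤
      (-1) ^ n * ((-1) ^ n * (q / (π * (μ ^ 2 - α ^ 2)))) := by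
  have hsq : δ ^ 2 ≤ α ^ 2 := sq_le_sq.2 (hδ.trans (le_abs_self α))
  have hden : 0 < π * (μ ^ 2 - α ^ 2) := mul_pos pi_pos (sub_pos.2 hα)
  have hq : 0 ≤ q := (abs_nonneg p).trans hpq
  have hden' : 0 < π * (μ ^ 2 - δ ^ 2) := mul_pos pi_pos (by linarith)
  rw [← mul_assoc, ← mul_zpow, neg_one_mul, neg_neg, one_zpow, one_mul, abs_mul,
    abs_neg_one_zpow, one_mul, abs_div, abs_of_pos hden']
  exact div_le_div₀ hq hpq hden (mul_le_mul_of_nonneg_left (by linarith) pi_pos.le)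

lemma oneSubCosCoeff_zero (δ : ℝ) : oneSubCosCoeff δ 0 = 1 - sinc (π * δ) := by
  simp [oneSubCosCoeff, cosCoeff]

lemma oneSubCosCoeff_intCast {δ : ℝ} {n : ℤ} (hn : n ≠ 0) (h : (n : ℝ) ^ 2 ≠ δ ^ 2) :
    oneSubCosCoeff δ n =
      (-1) ^ n * (δ * sin (π * δ) / (π * ((n : ℝ) ^ 2 - δ ^ 2))) := by
  rw [oneSubCosCoeff, cosCoeff_intCast h, cosCoeff_intCast (by simpa using hn)]
  simp

lemma abs_oneSubCosCoeff_le {δ α : ℝ} (hδ : |δ| ≤ α) (hα : α ≤ 1 / 2) (n : ℤ) :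
    |oneSubCosCoeff δ n| ≤ (-1) ^ n * oneSubCosCoeff α n := by
  have hα0 : 0 ≤ α := (abs_nonneg δ).trans hδ
  have hsq : δ ^ 2 ≤ α ^ 2 := sq_le_sq.2 (hδ.trans (le_abs_self α))
  rcases eq_or_ne n 0 with rfl | hn
  · have heven : sinc (π * |δ|) = sinc (π * δ) := by
      rcases abs_choice δ with h | h <;> simp [h]
    have hsinc : sinc (π * α) ≤ sinc (π * δ) := by
      rw [← heven]
      have hpi := pi_pos
      exact antitoneOn_sinc ⟨by positivity, by nlinarith⟩ ⟨by positivity, by nlinarith⟩ (by gcongr)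
    rw [Int.cast_zero, zpow_zero, one_mul, oneSubCosCoeff_zero, oneSubCosCoeff_zero,
      abs_of_nonneg (sub_nonneg.2 (sinc_le_one _))]
    gcongr
  · have hn1 : (1 : ℝ) ≤ (n : ℝ) ^ 2 := by
      exact_mod_cast Int.add_one_le_of_lt (sq_pos_of_ne_zero hn)
    have hαn : α ^ 2 < (n : ℝ) ^ 2 := by nlinarith
    rw [oneSubCosCoeff_intCast hn (by linarith), oneSubCosCoeff_intCast hn hαn.ne']
    exact abs_neg_one_zpow_mul_div_le n (abs_mul_sin_pi_mul_le hδ hα) hδ hαn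

lemma abs_sinCoeff_le {δ α : ℝ} (hδ : |δ| ≤ α) (hα : α ≤ 1 / 4) (n : ℤ) :
    |sinCoeff δ (n + 1 / 2)| ≤ (-1) ^ n * sinCoeff α (n + 1 / 2) := by
  have hα0 : 0 ≤ α := (abs_nonneg δ).trans hδ
  have hsq : δ ^ 2 ≤ α ^ 2 := sq_le_sq.2 (hδ.trans (le_abs_self α))
  have hμ : (1 / 4 : ℝ) ≤ ((n : ℝ) + 1 / 2) ^ 2 := by
    have hn : (0 : ℤ) ≤ n * (n + 1) := by
      rcases le_or_gt 0 n with h | h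
      · positivity
      · nlinarith
    have hn' : (0 : ℝ) ≤ n * (n + 1) := by exact_mod_cast hn
    linarith
  have hαμ : α ^ 2 < ((n : ℝ) + 1 / 2) ^ 2 := by nlinarith
  rw [sinCoeff_intCast_add_half (by linarith), sinCoeff_intCast_add_half hαμ.ne']
  exact abs_neg_one_zpow_mul_div_le n (abs_mul_cos_pi_mul_le hδ hα) hδ hαμ

end Monotonicity

section SpectralNorm

open scoped Matrix.Norms.L2Operator
open Matrix

lemma l2_opNorm_hadamard_le_of_hasSum {𝕜 ι m n : Type*} [RCLike 𝕜] [Fintype m] [Fintype n]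
    [DecidableEq n] (A K : Matrix m n 𝕜) {c : ι → m → 𝕜} {u : ι → n → 𝕜}
    {C : ι → ℝ} {S : ℝ} (hC : HasSum C S) (hc : ∀ i j, ‖c i j‖ ≤ C i) (hu : ∀ i k, ‖u i k‖ ≤ 1)
    (hK : ∀ j k, HasSum (fun i => c i j * u i k) (K j k)) :
    ‖K ⊙ A‖ ≤ S * ‖A‖ := by
  classical
  rcases isEmpty_or_nonempty m with _ | ⟨⟨j₀⟩⟩
  · simp [Subsingleton.elim A 0]
  have hC0 (i : ι) : 0 ≤ C i := (norm_nonneg _).trans (hc i j₀)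
  have hsum : HasSum (fun i => diagonal (c i) * A * diagonal (u i)) (K ⊙ A) := by
    refine Pi.hasSum.2 fun j => Pi.hasSum.2 fun k => ?_
    simpa only [mul_diagonal, diagonal_mul, hadamard_apply, mul_right_comm] using
      (hK j k).mul_right (A j k)
  refine hsum.norm_le_of_bounded (hC.mul_right ‖A‖) fun i => ?_
  calc ‖diagonal (c i) * A * diagonal (u i)‖
      ≤ ‖diagonal (c i)‖ * ‖A‖ * ‖diagonal (u i)‖ :=
        (l2_opNorm_mul _ _).trans (by gcongr; exact l2_opNorm_mul _ _)
    _ ≤ C i * ‖A‖ * 1 := by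
      rw [l2_opNorm_diagonal, l2_opNorm_diagonal]
      gcongr
      · exact mul_nonneg (hC0 i) (norm_nonneg A)
      · exact (pi_norm_le_iff_of_nonneg (hC0 i)).2 (hc i)
      · exact (pi_norm_le_iff_of_nonneg zero_le_one).2 (hu i)
    _ = C i * ‖A‖ := mul_one _

lemma sum_exp_two_pi_mul_I_mul_div_eq_zero {M : ℕ} [NeZero M] {d : ℤ} (hd : ¬(M : ℤ) ∣ d) :
    ∑ j : Fin M, Complex.exp (2 * π * Complex.I * (j * d / M)) = 0 := by
  have hω := Complex.isPrimitiveRoot_exp M (NeZero.ne M)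
  set ω := Complex.exp (2 * π * Complex.I / M) with hω_def
  have hterm (j : Fin M) :
      Complex.exp (2 * π * Complex.I * (j * d / M)) = (ω ^ d) ^ (j : ℕ) := by
    rw [hω_def, ← Complex.exp_int_mul, ← Complex.exp_nat_mul]
    congr 1
    ring
  have hne : ω ^ d ≠ 1 := mt (hω.zpow_eq_one_iff_dvd d).1 hd
  have hpow : (ω ^ d) ^ M = 1 := by
    rw [← zpow_natCast, zpow_comm, zpow_natCast, hω.pow_eq_one, _root_.one_zpow]
  simp only [hterm]
  rw [Fin.sum_univ_eq_sum_range (fun j => (ω ^ d) ^ j), geom_sum_eq hne, hpow, sub_self, zero_div]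

/-- The DFT matrix of order `M` with row indices shifted by `a` and column indices by `b`;
`a = b = N` centres the index range `{-N, …, N}` when `M = 2N + 1`. -/
noncomputable def shiftedDFT (M : ℕ) (a b : ℝ) : Matrix (Fin M) (Fin M) ℂ :=
  .of fun j k => Complex.exp (-2 * π * Complex.I * (j - a) * (k - b) / M)

lemma shiftedDFT_conjTranspose_mul_self (M : ℕ) [NeZero M] (a b : ℝ) :
    (shiftedDFT M a b)ᴴ * shiftedDFT M a b = diagonal fun _ => (M : ℂ) := by
  have hterm (j k l : Fin M) : star (shiftedDFT M a b j k) * shiftedDFT M a b j l =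
      Complex.exp (2 * π * Complex.I * (a * (l - k) / M)) *
        Complex.exp (2 * π * Complex.I * (j * ((k - l : ℤ) : ℂ) / M)) := by
    simp only [shiftedDFT, of_apply]
    rw [Complex.star_def, ← Complex.exp_conj, ← Complex.exp_add, ← Complex.exp_add]
    simp only [map_div₀, map_mul, map_sub, map_neg, Complex.conj_I, Complex.conj_ofReal,
      map_natCast, map_ofNat]
    congr 1
    push_cast
    ring
  ext k l
  simp only [mul_apply, conjTranspose_apply, hterm, ← Finset.mul_sum]
  rcases eq_or_ne k l with rfl | hkl
  · simp
  · have hdvd : ¬(M : ℤ) ∣ (k - l : ℤ) := fun h =>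
      hkl (Fin.ext (by have := Int.eq_zero_of_abs_lt_dvd h (abs_lt.2 ⟨by omega, by omega⟩); omega))
    rw [sum_exp_two_pi_mul_I_mul_div_eq_zero hdvd, mul_zero, diagonal_apply_ne _ hkl]

lemma l2_opNorm_shiftedDFT (M : ℕ) [NeZero M] (a b : ℝ) : ‖shiftedDFT M a b‖ = √M := by
  have h := l2_opNorm_conjTranspose_mul_self (shiftedDFT M a b)
  rw [shiftedDFT_conjTranspose_mul_self, l2_opNorm_diagonal, pi_norm_const,
    Complex.norm_natCast] at h
  rw [h, sqrt_mul_self (norm_nonneg _)]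

theorem nudft_kadec_spectral_bound_general {m n : Type*} [Fintype m] [Fintype n] [DecidableEq n]
    {α : ℝ} {δ : m → ℝ} {x : n → ℝ} {A B : Matrix m n ℂ} (hα : α ≤ 1 / 4)
    (hδ : ∀ j, |δ j| ≤ α) (hx : ∀ k, |x k| ≤ π)
    (hB : ∀ j k, B j k = A j k * Complex.exp (-(δ j * x k : ℝ) * Complex.I)) :
    ‖A - B‖ ≤ (1 - cos (π * α) + sin (π * α)) * ‖A‖ := by
  let C : Matrix m n ℂ := .of fun j k => ((1 - cos (δ j * x k) : ℝ) : ℂ)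
  let S : Matrix m n ℂ := .of fun j k => Complex.I * (sin (δ j * x k) : ℝ)
  have hsplit : A - B = C ⊙ A + S ⊙ A := by
    ext j k
    simp only [Matrix.sub_apply, Matrix.add_apply, hadamard_apply, C, S, of_apply, hB,
      Complex.exp_mul_I, Complex.cos_neg, Complex.sin_neg]
    push_cast
    ring
  have hC : ‖C ⊙ A‖ ≤ (1 - cos (π * α)) * ‖A‖ :=
    l2_opNorm_hadamard_le_of_hasSum A C (hasSum_neg_one_zpow_mul_oneSubCosCoeff α)
      (fun i j => by simpa using abs_oneSubCosCoeff_le (hδ j) (by linarith) i)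
      (fun _ _ => (Complex.norm_exp_ofReal_mul_I _).le)
      fun j k => hasSum_oneSubCosCoeff (δ j) (abs_le.1 (hx k))
  have hS : ‖S ⊙ A‖ ≤ sin (π * α) * ‖A‖ :=
    l2_opNorm_hadamard_le_of_hasSum A S (hasSum_neg_one_zpow_mul_sinCoeff α)
      (fun i j => by
        rw [Complex.norm_real]
        exact abs_sinCoeff_le (hδ j) hα i)
      (fun _ _ => (Complex.norm_exp_ofReal_mul_I _).le)
      fun j k => hasSum_sinCoeff (δ j) (abs_le.1 (hx k))
  rw [hsplit, add_mul]
  exact (norm_add_le _ _).trans (add_le_add hC hS)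

end SpectralNorm

lemma abs_two_pi_mul_centred_div_le {N : ℕ} (k : Fin (2 * N + 1)) :
    |2 * π * (((k : ℕ) : ℝ) - N) / (2 * N + 1)| ≤ π := by
  have hk : |((k : ℕ) : ℝ) - N| ≤ N := by
    have : ((k : ℕ) : ℝ) ≤ 2 * N := by exact_mod_cast Nat.lt_succ_iff.1 k.2
    exact abs_le.2 ⟨by linarith [Nat.cast_nonneg (α := ℝ) (k : ℕ)], by linarith⟩
  have hpi := pi_pos
  rw [abs_div, abs_mul, abs_of_pos two_pi_pos, abs_of_pos (by positivity : (0 : ℝ) < 2 * N + 1),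
    div_le_iff₀ (by positivity)]
  nlinarith

lemma exp_perturbed_node_eq_mul (δ j k M : ℂ) :
    Complex.exp (-2 * π * Complex.I * (j + δ) * k / M) =
      Complex.exp (-2 * π * Complex.I * j * k / M) *
        Complex.exp (-(δ * (2 * π * k / M)) * Complex.I) := by
  rw [← Complex.exp_add]
  congr 1
  ring

/-- discrete Kadec-1/4 theorem: spectral-norm bound on `F - F̃`. -/
theorem nudft_kadec_spectral_bound (N : ℕ) (hN : 0 < N) (α : ℝ) (hα0 : 0 ≤ α) (hα : α < 1/4)
    (δ : Fin (2*N+1) → ℝ) (hδ : ∀ j, |δ j| ≤ α)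
    (F Ftil : Matrix (Fin (2*N+1)) (Fin (2*N+1)) ℂ)
    (hF : ∀ j k, F j k =
      Complex.exp (-2 * (π : ℂ) * Complex.I * (((j : ℕ) : ℂ) - (N : ℂ)) *
        (((k : ℕ) : ℂ) - (N : ℂ)) / (2*(N : ℂ)+1)))
    (hFtil : ∀ j k, Ftil j k =
      Complex.exp (-2 * (π : ℂ) * Complex.I * ((((j : ℕ) : ℂ) - (N : ℂ)) + (δ j : ℂ)) *
        (((k : ℕ) : ℂ) - (N : ℂ)) / (2*(N : ℂ)+1))) :
    ‖Matrix.toEuclideanCLM (𝕜 := ℂ) F‖ = Real.sqrt (2*N+1) ∧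
    ‖Matrix.toEuclideanCLM (𝕜 := ℂ) (F - Ftil)‖ ≤
      (1 - Real.cos (π*α) + Real.sin (π*α)) * ‖Matrix.toEuclideanCLM (𝕜 := ℂ) F‖ := by
  have hF_eq : F = shiftedDFT (2 * N + 1) N N := by
    ext j k
    simp [hF, shiftedDFT]
  refine ⟨?_, nudft_kadec_spectral_bound_general hα.le hδ abs_two_pi_mul_centred_div_le
    fun j k => ?_⟩
  · simp [Matrix.l2_opNorm_toEuclideanCLM, hF_eq, l2_opNorm_shiftedDFT]
  · rw [hF, hFtil, exp_perturbed_node_eq_mul]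
    push_cast
    rfl
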